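/- arXiv:1801.08733 — 2 statements merged into one kernel-verified Lean document; each statement's English description precedes it below -/
import Mathlib

section
/- For every δ > 0 there exists a constant C = C(δ) such that for all sufficiently large real x and every integer i with 1 ≤ i ≤ (1 − δ) log log x, the number N_i(x) of positive integers n ≤ x with Ω(n) ≤ i satisfies N_i(x) < C · (x / log x) · (log log x)^{i−1} / (i−1)!. -/
/-! Since `∑_{n ≤ x} log (x / n) = log (x ^ N / N!) ≤ x` with `N = ⌊x⌋`, the count times `log x`
exceeds `∑ log n`, taken over `n ≤ x` with `Ω n ≤ i`, by at most `x`. Write `log = ζ * Λ`: stripping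
a prime power `d > 1` from `n` leaves `Ω ≤ i - 1`, so Chebyshev's bound `ψ y ≪ y` gives
`∑ log n ≪ x ∑ 1 / m`, the last sum being over `m ≤ x` with `Ω m ≤ i - 1`. Splitting `m = b ^ 2 * r`
with `r` squarefree bounds it by `ζ(2) ∑_{k ≤ i - 1} P ^ k / k!`, where, by Mertens,
`P = ∑_{p ≤ x} 1 / p ≤ log log x + O(1)`. As `i ≤ (1 - δ) log log x`, the terms grow at least
geometrically, so the last one dominates, and the `O(1)` costs only a constant factor. -/

open Finset
open scoped Nat ArithmeticFunction.Omega ArithmeticFunction.vonMangoldt ArithmeticFunction.zeta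

theorem factorial_mul_sum_powersetCard_prod_le_sum_pow {ι R : Type*} [CommSemiring R]
    [PartialOrder R] [IsOrderedRing R] {s : Finset ι} {f : ι → R} (hf : ∀ i ∈ s, 0 ≤ f i) (k : ℕ) :
    (k ! : R) * ∑ t ∈ s.powersetCard k, ∏ i ∈ t, f i ≤ (∑ i ∈ s, f i) ^ k := by
  classical
  let χ (t : Finset ι) (i : ι) : ℕ := if i ∈ t then 1 else 0
  have χ_injective : Function.Injective χ := fun t u htu ↦ by
    ext i
    have := congrFun htu i
    simp only [χ] at this
    split_ifs at this <;> simp_all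
  have term_eq : ∀ t ∈ s.powersetCard k,
      (k ! : R) * ∏ i ∈ t, f i = Nat.multinomial s (χ t) * ∏ i ∈ s, f i ^ χ t i := fun t ht ↦ by
    obtain ⟨hts, rfl⟩ := mem_powersetCard.1 ht
    have hmult : Nat.multinomial s (χ t) = (#t)! := by
      rw [Nat.multinomial, prod_eq_one fun i _ ↦ by simp only [χ]; split_ifs <;> rfl]
      simp [χ, inter_eq_right.2 hts]
    simp [hmult, χ, pow_ite, prod_ite_mem, inter_eq_right.2 hts]
  rw [mul_sum, sum_congr rfl term_eq, sum_pow_eq_sum_piAntidiag,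
    ← sum_image (f := fun c ↦ (Nat.multinomial s c : R) * ∏ i ∈ s, f i ^ c i) χ_injective.injOn]
  refine sum_le_sum_of_subset_of_nonneg (image_subset_iff.2 fun t ht ↦ ?_) fun c _ _ ↦
    mul_nonneg (Nat.cast_nonneg _) (prod_nonneg fun i hi ↦ pow_nonneg (hf i hi) _)
  obtain ⟨hts, rfl⟩ := mem_powersetCard.1 ht
  simpa [χ, inter_eq_right.2 hts] using fun i hi ↦ hts hi

theorem sum_Icc_div_le_log_sub_log_add {a ℓ : ℕ → ℝ} {m N : ℕ} {K : ℝ}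
    (hmono : MonotoneOn ℓ (Set.Ici m)) (hpos : 0 < ℓ m)
    (hA : ∀ n, m ≤ n → ∑ i ∈ Icc m n, a i ≤ ℓ n + K) (hmN : m ≤ N) :
    ∑ n ∈ Icc m N, a n / ℓ n ≤ Real.log (ℓ N) - Real.log (ℓ m) + (1 + K / ℓ m) := by
  have hℓ {n : ℕ} (hn : m ≤ n) : 0 < ℓ n := hpos.trans_le (hmono Set.self_mem_Ici hn hn)
  have partial_summation : ∑ n ∈ Icc m N, a n / ℓ n - (∑ n ∈ Icc m N, a n) / ℓ N ≤
      Real.log (ℓ N) - Real.log (ℓ m) + K * ((ℓ m)⁻¹ - (ℓ N)⁻¹) := by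
    induction N, hmN using Nat.le_induction with
    | base => simp
    | succ N hmN ih =>
      have hN := hℓ hmN
      have hN' := hℓ (hmN.trans N.le_succ)
      have hinv : 0 ≤ (ℓ N)⁻¹ - (ℓ (N + 1))⁻¹ :=
        sub_nonneg.2 (inv_anti₀ hN (hmono hmN (hmN.trans N.le_succ) N.le_succ))
      have hlog : 1 - ℓ N / ℓ (N + 1) ≤ Real.log (ℓ (N + 1)) - Real.log (ℓ N) := by
        have := Real.one_sub_inv_le_log_of_pos (div_pos hN' hN)
        rwa [inv_div, Real.log_div hN'.ne' hN.ne'] at this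
      have habel := mul_le_mul_of_nonneg_right (hA N hmN) hinv
      have hcancel : ℓ N * (ℓ N)⁻¹ = 1 := mul_inv_cancel₀ hN.ne'
      rw [sum_Icc_succ_top (by lia), sum_Icc_succ_top (by lia)]
      simp only [div_eq_mul_inv] at ih hlog ⊢
      linarith
  have hlast : (∑ n ∈ Icc m N, a n) / ℓ N ≤ 1 + K * (ℓ N)⁻¹ := by
    rw [div_le_iff₀ (hℓ hmN), add_mul, one_mul, inv_mul_cancel_right₀ (hℓ hmN).ne']
    exact hA N hmN
  simp only [div_eq_mul_inv K]
  linarith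

theorem sum_range_succ_pow_div_factorial_le {K : Type*} [Field K] [LinearOrder K]
    [IsStrictOrderedRing K] {L r : K} {j : ℕ} (hL : 0 < L) (hr : r < 1) (hj : j ≤ r * L) :
    ∑ k ∈ range (j + 1), L ^ k / k ! ≤ (1 - r)⁻¹ * (L ^ j / j !) := by
  have hr' : 0 < 1 - r := sub_pos.2 hr
  induction j with
  | zero =>
    have : 0 ≤ r := nonneg_of_mul_nonneg_left (by simpa using hj) hL
    simpa using (one_le_inv₀ hr').2 (by linarith)
  | succ j ih =>
    push_cast at hj
    set u := L ^ (j + 1) / ((j + 1)! : K)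
    have hratio : L ^ j / j ! ≤ r * u :=
      calc L ^ j / j ! = (j + 1) / L * u := by
            simp only [u, Nat.factorial_succ, pow_succ]
            push_cast
            field_simp
        _ ≤ r * u := by gcongr; exact (div_le_iff₀ hL).2 hj
    calc ∑ k ∈ range (j + 1 + 1), L ^ k / k !
        ≤ (1 - r)⁻¹ * (L ^ j / j !) + u := by
          rw [sum_range_succ]; gcongr; exact ih (by linarith)
      _ ≤ (1 - r)⁻¹ * (r * u) + u := by gcongr
      _ = (1 - r)⁻¹ * u := by field_simp; ring

theorem add_pow_le_exp_mul_pow {L B : ℝ} {k : ℕ} (hL : 0 < L) (hB : 0 ≤ B) (hk : k ≤ L) :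
    (L + B) ^ k ≤ Real.exp B * L ^ k :=
  calc (L + B) ^ k = (B / L + 1) ^ k * L ^ k := by rw [← mul_pow]; congr 1; field_simp; ring
    _ ≤ Real.exp (B / L) ^ k * L ^ k := by gcongr; exact Real.add_one_le_exp _
    _ = Real.exp (k * (B / L)) * L ^ k := by rw [Real.exp_nat_mul]
    _ ≤ Real.exp (L * (B / L)) * L ^ k := by gcongr
    _ = Real.exp B * L ^ k := by rw [mul_div_cancel₀ _ hL.ne']

theorem card_mul_log_le_add_sum_log {x : ℝ} (hx : 0 ≤ x) {S : Finset ℕ} (hS : S ⊆ Icc 1 ⌊x⌋₊) :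
    #S * Real.log x ≤ x + ∑ n ∈ S, Real.log n := by
  have hprod : ∏ n ∈ Icc 1 ⌊x⌋₊, x / n = x ^ ⌊x⌋₊ / (⌊x⌋₊)! := by
    rw [prod_div_distrib, prod_const, Nat.card_Icc, Nat.add_sub_cancel,
      ← prod_Ico_id_eq_factorial, Nat.cast_prod, Ico_add_one_right_eq_Icc]
  have hterm : ∀ n ∈ Icc 1 ⌊x⌋₊, 0 < (n : ℝ) ∧ n ≤ x := fun n hn ↦
    ⟨Nat.cast_pos.2 (mem_Icc.1 hn).1, (Nat.le_floor_iff hx).1 (mem_Icc.1 hn).2⟩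
  have hratio : ∀ n ∈ Icc 1 ⌊x⌋₊, 1 ≤ x / n := fun n hn ↦
    (one_le_div (hterm n hn).1).2 (hterm n hn).2
  suffices ∑ n ∈ S, Real.log (x / n) ≤ x by
    have hlog_div : ∀ n ∈ S, Real.log (x / n) = Real.log x - Real.log n := fun n hn ↦
      have ⟨hn0, hnx⟩ := hterm n (hS hn)
      Real.log_div (hn0.trans_le hnx).ne' hn0.ne'
    rw [sum_congr rfl hlog_div, sum_sub_distrib, sum_const, nsmul_eq_mul] at this
    linarith
  calc ∑ n ∈ S, Real.log (x / n) ≤ ∑ n ∈ Icc 1 ⌊x⌋₊, Real.log (x / n) :=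
        sum_le_sum_of_subset_of_nonneg hS fun n hn _ ↦ Real.log_nonneg (hratio n hn)
    _ = Real.log (x ^ ⌊x⌋₊ / (⌊x⌋₊)!) := by
        rw [← hprod, Real.log_prod fun n hn ↦ (zero_lt_one.trans_le (hratio n hn)).ne']
    _ ≤ Real.log (Real.exp x) := by
        refine Real.log_le_log ?_ (Real.pow_div_factorial_le_exp x hx _)
        exact hprod ▸ prod_pos fun n hn ↦ zero_lt_one.trans_le (hratio n hn)
    _ = x := Real.log_exp x

theorem sum_vonMangoldt_div_le (N : ℕ) :
    ∑ n ∈ Ioc 0 N, Λ n / n ≤ Real.log N + (Real.log 4 + 4) := by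
  obtain rfl | hN := N.eq_zero_or_pos
  · simpa using (by positivity : 0 ≤ Real.log 4 + 4)
  have hNpos : (0 : ℝ) < N := Nat.cast_pos.2 hN
  have hfloor (n : ℕ) : (N : ℝ) / n ≤ (N / n : ℕ) + 1 := by
    rw [← Nat.floor_div_eq_div (K := ℝ)]
    exact (Nat.lt_floor_add_one _).le
  have hlog : ∑ n ∈ Ioc 0 N, Λ n * (N / n : ℕ) ≤ N * Real.log N := by
    rw [← ArithmeticFunction.sum_Ioc_mul_zeta_eq_sum, ArithmeticFunction.vonMangoldt_mul_zeta]
    calc ∑ n ∈ Ioc 0 N, ArithmeticFunction.log n ≤ #(Ioc 0 N) • Real.log N :=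
          sum_le_card_nsmul _ _ _ fun n hn ↦ by
            obtain ⟨hn0, hnN⟩ := mem_Ioc.1 hn
            exact Real.log_le_log (Nat.cast_pos.2 hn0) (Nat.cast_le.2 hnN)
      _ = N * Real.log N := by rw [Nat.card_Ioc, Nat.sub_zero, nsmul_eq_mul]
  have hpsi : ∑ n ∈ Ioc 0 N, Λ n ≤ (Real.log 4 + 4) * N := by
    simpa [Chebyshev.psi] using Chebyshev.psi_le_const_mul_self hNpos.le
  refine le_of_mul_le_mul_left ?_ hNpos
  calc N * ∑ n ∈ Ioc 0 N, Λ n / n = ∑ n ∈ Ioc 0 N, Λ n * (N / n) := by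
        rw [mul_sum]; exact sum_congr rfl fun n _ ↦ by ring
    _ ≤ ∑ n ∈ Ioc 0 N, Λ n * ((N / n : ℕ) + 1) := by
        gcongr with n
        exact hfloor n
    _ = ∑ n ∈ Ioc 0 N, Λ n * (N / n : ℕ) + ∑ n ∈ Ioc 0 N, Λ n := by
        simp only [mul_add, mul_one, sum_add_distrib]
    _ ≤ N * (Real.log N + (Real.log 4 + 4)) := by linarith

theorem exists_sum_primesLE_inv_le :
    ∃ B : ℝ, 0 ≤ B ∧ ∀ x : ℝ, 2 ≤ x →
      ∑ p ∈ ⌊x⌋₊.primesLE, (p : ℝ)⁻¹ ≤ Real.log (Real.log x) + B := by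
  have hlog2 : 0 < Real.log 2 := Real.log_pos one_lt_two
  have hloglog2 : Real.log (Real.log 2) ≤ 0 :=
    Real.log_nonpos hlog2.le (by linarith [Real.log_two_lt_d9])
  have hmono : MonotoneOn (fun n : ℕ ↦ Real.log n) (Set.Ici 2) := fun m hm n _ hmn ↦
    Real.log_le_log (Nat.cast_pos.2 (zero_lt_two.trans_le hm)) (Nat.cast_le.2 hmn)
  have hΛ (n : ℕ) (hn : 2 ≤ n) : ∑ i ∈ Icc 2 n, Λ i / i ≤ Real.log n + (Real.log 4 + 4) :=
    (sum_le_sum_of_subset_of_nonneg ((Icc_subset_Ioc_iff hn).2 ⟨zero_lt_two, le_rfl⟩) fun i _ _ ↦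
      div_nonneg ArithmeticFunction.vonMangoldt_nonneg i.cast_nonneg).trans
      (sum_vonMangoldt_div_le n)
  have hprime (N : ℕ) : ∀ p ∈ N.primesLE, (p : ℝ)⁻¹ = Λ p / p / Real.log p := fun p hp ↦ by
    have := (Real.log_pos (Nat.one_lt_cast.2 (Nat.one_lt_of_mem_primesLE hp))).ne'
    rw [ArithmeticFunction.vonMangoldt_apply_prime (Nat.prime_of_mem_primesLE hp)]
    field_simp
  refine ⟨1 + (Real.log 4 + 4) / Real.log 2 - Real.log (Real.log 2), ?_, fun x hx ↦ ?_⟩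
  · have : 0 ≤ (Real.log 4 + 4) / Real.log 2 := by positivity
    linarith
  set N := ⌊x⌋₊
  have hN : 2 ≤ N := Nat.le_floor hx
  have hloglog : Real.log (Real.log N) ≤ Real.log (Real.log x) := by
    have hN1 : (1 : ℝ) < N := Nat.one_lt_cast.2 hN
    exact Real.log_le_log (Real.log_pos hN1)
      (Real.log_le_log (by positivity) (Nat.floor_le (by positivity)))
  calc ∑ p ∈ N.primesLE, (p : ℝ)⁻¹ = ∑ p ∈ N.primesLE, Λ p / p / Real.log p :=
        sum_congr rfl (hprime N)
    _ ≤ ∑ n ∈ Icc 2 N, Λ n / n / Real.log n := by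
        rw [Nat.primesLE_eq_filter_Icc_two]
        exact sum_le_sum_of_subset_of_nonneg (filter_subset _ _) fun n _ _ ↦
          div_nonneg (div_nonneg ArithmeticFunction.vonMangoldt_nonneg n.cast_nonneg)
            (Real.log_natCast_nonneg n)
    _ ≤ Real.log (Real.log N) - Real.log (Real.log 2) + (1 + (Real.log 4 + 4) / Real.log 2) := by
        simpa using sum_Icc_div_le_log_sub_log_add hmono (by simpa using hlog2) hΛ hN
    _ ≤ _ := by linarith

/-- The set of positive integers `n ≤ N` with `Ω n ≤ i`, so that `N_i(x) = #(omegaLE i ⌊x⌋₊)`. -/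
def omegaLE (i N : ℕ) : Finset ℕ := {n ∈ Icc 1 N | Ω n ≤ i}

theorem mem_omegaLE {i N n : ℕ} : n ∈ omegaLE i N ↔ (1 ≤ n ∧ n ≤ N) ∧ Ω n ≤ i := by
  rw [omegaLE, mem_filter, mem_Icc]

theorem omegaLE_subset_image_sq_mul_prod (i N : ℕ) :
    omegaLE i N ⊆ (Icc 1 N ×ˢ (range (i + 1)).sigma fun k ↦ N.primesLE.powersetCard k).image
      fun a ↦ a.1 ^ 2 * ∏ p ∈ a.2.2, p := fun m hm ↦ by
  obtain ⟨⟨hm0, hmN⟩, hΩ⟩ := mem_omegaLE.1 hm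
  obtain ⟨r, b, rfl, hr⟩ := Nat.sq_mul_squarefree m
  obtain ⟨hb2, hr0⟩ := mul_ne_zero_iff.1 (Nat.one_le_iff_ne_zero.1 hm0)
  have hb0 : b ≠ 0 := ne_zero_pow two_ne_zero hb2
  have hbN : b ≤ N :=
    (Nat.le_of_dvd hm0 ((dvd_pow_self b two_ne_zero).mul_right r)).trans hmN
  have hrN : r ≤ N := (Nat.le_of_dvd hm0 (dvd_mul_left r _)).trans hmN
  have hcard : #r.primeFactors ≤ i := by
    rw [ArithmeticFunction.cardFactors_mul hb2 hr0] at hΩ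
    exact (List.toFinset_card_le _).trans (le_of_add_le_right hΩ)
  have hprimes : r.primeFactors ⊆ N.primesLE := fun p hp ↦
    Nat.mem_primesLE.2 ⟨(Nat.le_of_mem_primeFactors hp).trans hrN, Nat.prime_of_mem_primeFactors hp⟩
  refine mem_image.2 ⟨(b, ⟨#r.primeFactors, r.primeFactors⟩), ?_, ?_⟩
  · simp only [mem_product, mem_Icc, mem_sigma, mem_range, mem_powersetCard]
    exact ⟨⟨Nat.pos_of_ne_zero hb0, hbN⟩, Nat.lt_succ_of_le hcard, hprimes, trivial⟩
  · rw [Nat.prod_primeFactors_of_squarefree hr]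

theorem sum_omegaLE_inv_le (i N : ℕ) :
    ∑ m ∈ omegaLE i N, (m : ℝ)⁻¹ ≤
      Real.pi ^ 2 / 6 * ∑ k ∈ range (i + 1), (∑ p ∈ N.primesLE, (p : ℝ)⁻¹) ^ k / k ! := by
  have hsq : ∑ b ∈ Icc 1 N, ((b : ℝ) ^ 2)⁻¹ ≤ Real.pi ^ 2 / 6 := by
    simpa only [one_div] using sum_le_hasSum _ (fun b _ ↦ by positivity) hasSum_zeta_two
  have hesymm (k : ℕ) : ∑ t ∈ N.primesLE.powersetCard k, ∏ p ∈ t, (p : ℝ)⁻¹ ≤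
      (∑ p ∈ N.primesLE, (p : ℝ)⁻¹) ^ k / k ! :=
    (le_div_iff₀' (by positivity)).2
      (factorial_mul_sum_powersetCard_prod_le_sum_pow (fun p _ ↦ by positivity) k)
  calc ∑ m ∈ omegaLE i N, (m : ℝ)⁻¹
      ≤ ∑ a ∈ Icc 1 N ×ˢ (range (i + 1)).sigma fun k ↦ N.primesLE.powersetCard k,
          ((a.1 ^ 2 * ∏ p ∈ a.2.2, p : ℕ) : ℝ)⁻¹ :=
        (sum_le_sum_of_subset_of_nonneg (omegaLE_subset_image_sq_mul_prod i N)
          fun _ _ _ ↦ by positivity).trans (sum_image_le_of_nonneg fun _ _ ↦ by positivity)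
    _ = (∑ b ∈ Icc 1 N, ((b : ℝ) ^ 2)⁻¹) *
          ∑ k ∈ range (i + 1), ∑ t ∈ N.primesLE.powersetCard k, ∏ p ∈ t, (p : ℝ)⁻¹ := by
        rw [sum_sigma', sum_mul_sum, ← sum_product']
        simp only [Nat.cast_mul, Nat.cast_pow, Nat.cast_prod, mul_inv, prod_inv_distrib]
    _ ≤ _ := by gcongr with k; exact hesymm k

/-- The indicator function of the integers `n ≥ 1` with `Ω n ≤ i`, as an arithmetic function so that
it can be convolved. -/
def omegaLEIndicator (i : ℕ) : ArithmeticFunction ℝ :=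
  ⟨fun n ↦ if n ≠ 0 ∧ Ω n ≤ i then 1 else 0, by simp⟩

theorem omegaLEIndicator_apply (i n : ℕ) :
    omegaLEIndicator i n = if n ≠ 0 ∧ Ω n ≤ i then 1 else 0 := rfl

theorem sum_omegaLE_eq_sum_indicator_mul (i N : ℕ) (f : ℕ → ℝ) :
    ∑ n ∈ omegaLE i N, f n = ∑ n ∈ Ioc 0 N, omegaLEIndicator i n * f n := by
  simp only [omegaLE, omegaLEIndicator_apply, sum_filter, ite_mul, one_mul, zero_mul]
  exact sum_congr rfl fun n hn ↦ by simp [(mem_Ioc.1 hn).1.ne']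

theorem omegaLEIndicator_succ_mul_le {i m d : ℕ} (hd : 1 < d) :
    omegaLEIndicator (i + 1) (m * d) ≤ omegaLEIndicator i m := by
  simp only [omegaLEIndicator_apply]
  split_ifs with hmd hm
  · rfl
  · obtain ⟨⟨hm0, hd0⟩, hΩ⟩ := hmd.imp_left mul_ne_zero_iff.1
    rw [ArithmeticFunction.cardFactors_mul hm0 hd0] at hΩ
    have := ArithmeticFunction.cardFactors_pos_iff_one_lt.2 hd
    exact absurd ⟨hm0, by lia⟩ hm
  · exact zero_le_one
  · rfl

theorem omegaLEIndicator_succ_mul_log_le (i n : ℕ) :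
    omegaLEIndicator (i + 1) n * Real.log n ≤ (omegaLEIndicator i * Λ) n := by
  rw [← ArithmeticFunction.log_apply, ← ArithmeticFunction.zeta_mul_vonMangoldt,
    ArithmeticFunction.mul_apply, ArithmeticFunction.mul_apply, mul_sum]
  refine sum_le_sum fun ⟨m, d⟩ hmd ↦ ?_
  obtain ⟨rfl, hn⟩ := Nat.mem_divisorsAntidiagonal.1 hmd
  rw [ArithmeticFunction.natCoe_apply, ArithmeticFunction.zeta_apply_ne (left_ne_zero_of_mul hn),
    Nat.cast_one, one_mul]
  obtain hΛ | hΛ := eq_or_ne (Λ d) 0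
  · simp [hΛ]
  · exact mul_le_mul_of_nonneg_right
      (omegaLEIndicator_succ_mul_le (ArithmeticFunction.vonMangoldt_ne_zero_iff.1 hΛ).one_lt)
      ArithmeticFunction.vonMangoldt_nonneg

theorem sum_log_omegaLE_succ_le (i N : ℕ) :
    ∑ n ∈ omegaLE (i + 1) N, Real.log n ≤ ∑ m ∈ omegaLE i N, Chebyshev.psi (N / m) := by
  calc ∑ n ∈ omegaLE (i + 1) N, Real.log n
      = ∑ n ∈ Ioc 0 N, omegaLEIndicator (i + 1) n * Real.log n :=
        sum_omegaLE_eq_sum_indicator_mul _ _ _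
    _ ≤ ∑ n ∈ Ioc 0 N, (omegaLEIndicator i * Λ) n :=
        sum_le_sum fun n _ ↦ omegaLEIndicator_succ_mul_log_le i n
    _ = ∑ m ∈ omegaLE i N, Chebyshev.psi (N / m) := by
        rw [ArithmeticFunction.sum_Ioc_mul_eq_sum_sum, sum_omegaLE_eq_sum_indicator_mul]
        simp only [Chebyshev.psi, Nat.floor_div_natCast, Nat.floor_natCast]

theorem card_omegaLE_succ_mul_log_le {x : ℝ} (hx : 1 ≤ x) (i : ℕ) :
    #(omegaLE (i + 1) ⌊x⌋₊) * Real.log x ≤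
      (Real.log 4 + 5) * x * ∑ m ∈ omegaLE i ⌊x⌋₊, (m : ℝ)⁻¹ := by
  have hx0 : 0 ≤ x := zero_le_one.trans hx
  have hpsi (m : ℕ) : Chebyshev.psi (⌊x⌋₊ / m) ≤ (Real.log 4 + 4) * x * (m : ℝ)⁻¹ :=
    calc Chebyshev.psi (⌊x⌋₊ / m) ≤ Chebyshev.psi (x / m) :=
          Chebyshev.psi_mono (by gcongr; exact Nat.floor_le hx0)
      _ ≤ (Real.log 4 + 4) * (x / m) := Chebyshev.psi_le_const_mul_self (by positivity)
      _ = (Real.log 4 + 4) * x * (m : ℝ)⁻¹ := by ring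
  have hone : 1 ≤ ∑ m ∈ omegaLE i ⌊x⌋₊, (m : ℝ)⁻¹ := by
    have hmem : 1 ∈ omegaLE i ⌊x⌋₊ := mem_omegaLE.2 ⟨⟨le_rfl, Nat.le_floor (by simpa)⟩, by simp⟩
    simpa using single_le_sum (f := fun m : ℕ ↦ (m : ℝ)⁻¹) (fun m _ ↦ by positivity) hmem
  calc #(omegaLE (i + 1) ⌊x⌋₊) * Real.log x
      ≤ x + ∑ n ∈ omegaLE (i + 1) ⌊x⌋₊, Real.log n :=
        card_mul_log_le_add_sum_log hx0 (filter_subset _ _)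
    _ ≤ x * 1 + ∑ m ∈ omegaLE i ⌊x⌋₊, (Real.log 4 + 4) * x * (m : ℝ)⁻¹ := by
        rw [mul_one]
        gcongr
        exact (sum_log_omegaLE_succ_le i _).trans (sum_le_sum fun m _ ↦ hpsi m)
    _ ≤ x * ∑ m ∈ omegaLE i ⌊x⌋₊, (m : ℝ)⁻¹ +
          (Real.log 4 + 4) * x * ∑ m ∈ omegaLE i ⌊x⌋₊, (m : ℝ)⁻¹ := by
        rw [← mul_sum]; gcongr
    _ = _ := by ring

theorem exists_sum_omegaLE_inv_le {r : ℝ} (hr : r < 1) :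
    ∃ D : ℝ, ∀ x : ℝ, Real.exp 1 < x → ∀ j : ℕ, j ≤ r * Real.log (Real.log x) →
      ∑ m ∈ omegaLE j ⌊x⌋₊, (m : ℝ)⁻¹ ≤ D * (Real.log (Real.log x) ^ j / j !) := by
  have : 0 < 1 - r := sub_pos.2 hr
  obtain ⟨B, hB, mertens⟩ := exists_sum_primesLE_inv_le
  refine ⟨Real.pi ^ 2 / 6 * ((1 - r)⁻¹ * Real.exp B), fun x hx j hj ↦ ?_⟩
  have hx2 : 2 ≤ x := by linarith [Real.add_one_le_exp 1]
  set L := Real.log (Real.log x)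
  have hL : 0 < L := Real.log_pos ((Real.lt_log_iff_exp_lt (by positivity)).2 hx)
  have hr0 : 0 ≤ r := nonneg_of_mul_nonneg_left (j.cast_nonneg.trans hj) hL
  calc ∑ m ∈ omegaLE j ⌊x⌋₊, (m : ℝ)⁻¹
      ≤ Real.pi ^ 2 / 6 * ∑ k ∈ range (j + 1), (∑ p ∈ ⌊x⌋₊.primesLE, (p : ℝ)⁻¹) ^ k / k ! :=
        sum_omegaLE_inv_le j ⌊x⌋₊
    _ ≤ Real.pi ^ 2 / 6 * ∑ k ∈ range (j + 1), (L + B) ^ k / k ! := by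
        gcongr
        exact mertens x hx2
    _ ≤ Real.pi ^ 2 / 6 * ((1 - r)⁻¹ * ((L + B) ^ j / j !)) := by
        gcongr
        exact sum_range_succ_pow_div_factorial_le (by positivity) hr
          (hj.trans (by gcongr; exact le_add_of_nonneg_right hB))
    _ ≤ Real.pi ^ 2 / 6 * ((1 - r)⁻¹ * (Real.exp B * L ^ j / j !)) := by
        gcongr
        exact add_pow_le_exp_mul_pow hL hB (hj.trans (mul_le_of_le_one_left hL.le hr.le))
    _ = _ := by ring

/-- For every `δ > 0` there is a constant `C` such that for all sufficiently large `x` and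
every integer `i` with `1 ≤ i ≤ (1 - δ) log log x`, the number of positive integers `n ≤ x`
with `Ω(n) ≤ i` is less than `C · (x / log x) · (log log x)^{i-1} / (i-1)!`. -/
theorem count_small_Omega_lt :
    ∀ δ : ℝ, 0 < δ → ∃ C : ℝ, ∃ X : ℝ, ∀ x : ℝ, X ≤ x →
      ∀ i : ℕ, 1 ≤ i → (i : ℝ) ≤ (1 - δ) * Real.log (Real.log x) →
      (((Finset.Icc 1 ⌊x⌋₊).filter fun n => n.primeFactorsList.length ≤ i).card : ℝ) <
        C * (x / Real.log x) *
          (Real.log (Real.log x) ^ (i - 1) / (Nat.factorial (i - 1) : ℝ)) := by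
  intro δ hδ
  obtain ⟨D, hsum⟩ := exists_sum_omegaLE_inv_le (sub_lt_self 1 hδ)
  refine ⟨(Real.log 4 + 5) * D + 1, 3, fun x hx i hi hiL ↦ ?_⟩
  obtain ⟨j, rfl⟩ : ∃ j, i = j + 1 := ⟨i - 1, by lia⟩
  have hxe : Real.exp 1 < x := Real.exp_one_lt_three.trans_le hx
  have hlog : 1 < Real.log x := (Real.lt_log_iff_exp_lt (by positivity)).2 hxe
  have hL : 0 < Real.log (Real.log x) := Real.log_pos hlog
  have hj : j ≤ (1 - δ) * Real.log (Real.log x) := by push_cast at hiL; linarith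
  calc (#(omegaLE (j + 1) ⌊x⌋₊) : ℝ)
      ≤ (Real.log 4 + 5) * x * (∑ m ∈ omegaLE j ⌊x⌋₊, (m : ℝ)⁻¹) / Real.log x :=
        (le_div_iff₀ (by positivity)).2 (card_omegaLE_succ_mul_log_le (by linarith) j)
    _ ≤ (Real.log 4 + 5) * x * (D * (Real.log (Real.log x) ^ j / j !)) / Real.log x := by
        gcongr
        exact hsum x hxe j hj
    _ = (Real.log 4 + 5) * D * (x / Real.log x) * (Real.log (Real.log x) ^ j / j !) := by ring
    _ < ((Real.log 4 + 5) * D + 1) * (x / Real.log x) * (Real.log (Real.log x) ^ j / j !) := by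
        gcongr
        exact lt_add_one _
end

section
/- For every δ > 0 there exists a constant C = C(δ) such that for all sufficiently large real x and every integer i with 2 ≤ i ≤ (1 − δ) log log x, the number of positive integers n ≤ x with Ω(n) ≤ i is at most C · x · (log x)^{α − α log α − 1}, where α = (i − 1)/log log x. -/
/-!
For `0 < z ≤ 1`, the condition `Ω n ≤ k + 1` gives `1 ≤ z ^ Ω n / z ^ (k + 1)`, so counting reduces
to sums weighted by the completely multiplicative function `z ^ Ω n`.

The integers `n ≤ √x` are negligible, and the others number at most `2 / log x` times the sum of
`log n`. Writing `log n` as the sum of `Λ` over the divisors of `n` and applying Chebyshev's bound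
`ψ y ≪ y` gives `∑ z ^ Ω n * log n ≪ z * x * ∑ z ^ Ω m / m`; the factor `z` comes from the prime
power carried by `Λ`, and replaces `z ^ (k + 1)` by `z ^ k` in the denominator. By Rankin's trick
the last sum is at most `e` times the Dirichlet series of `z ^ Ω` at `s = 1 + 1 / log x`, and
Bernoulli's inequality `(1 - t) ^ z ≤ 1 - z * t`, applied to each Euler factor, bounds that series
by `ζ(s) ^ z ≤ (1 + log x) ^ z`. The choice `z = k / log log x` minimises `(log x) ^ z / z ^ k`.
-/

open ArithmeticFunction hiding log map_zero
open Finset Real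
open scoped ArithmeticFunction.Omega

/-- The completely multiplicative function `n ↦ z ^ Ω n`, set to `0` at `n = 0`, where `Ω` has the
junk value `0`. It weights the integers by their number of prime factors. -/
def powOmega {R : Type*} [CommMonoidWithZero R] (z : R) : ℕ →*₀ R where
  toFun n := if n = 0 then 0 else z ^ Ω n
  map_zero' := if_pos rfl
  map_one' := by simp
  map_mul' m n := by
    rcases eq_or_ne m 0 with rfl | hm
    · simp
    rcases eq_or_ne n 0 with rfl | hn
    · simp
    simp only [hm, hn, mul_eq_zero, or_self, if_false, cardFactors_mul hm hn, pow_add]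

section PowOmega

variable {R : Type*} [CommMonoidWithZero R]

lemma powOmega_apply (z : R) {n : ℕ} (hn : n ≠ 0) : powOmega z n = z ^ Ω n :=
  if_neg hn

lemma powOmega_prime (z : R) {p : ℕ} (hp : p.Prime) : powOmega z p = z := by
  rw [powOmega_apply z hp.ne_zero, cardFactors_apply_prime hp, pow_one]

end PowOmega

section RealPowOmega

variable {z : ℝ}

lemma powOmega_nonneg (hz : 0 ≤ z) (n : ℕ) : 0 ≤ powOmega z n := by
  rcases eq_or_ne n 0 with rfl | hn
  · rw [map_zero]
  · rw [powOmega_apply z hn]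
    positivity

lemma powOmega_le_one (hz : 0 ≤ z) (hz1 : z ≤ 1) (n : ℕ) : powOmega z n ≤ 1 := by
  rcases eq_or_ne n 0 with rfl | hn
  · rw [map_zero]
    exact zero_le_one
  · rw [powOmega_apply z hn]
    exact pow_le_one₀ hz hz1

lemma powOmega_le_self_of_one_lt (hz : 0 ≤ z) (hz1 : z ≤ 1) {n : ℕ} (hn : 1 < n) :
    powOmega z n ≤ z := by
  rw [powOmega_apply z (by lia)]
  exact pow_le_of_le_one hz hz1 (cardFactors_pos_iff_one_lt.2 hn).ne'

end RealPowOmega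

lemma inv_one_sub_mul_le_rpow {z t : ℝ} (hz : 0 ≤ z) (hz1 : z ≤ 1) (ht : t < 1) :
    (1 - z * t)⁻¹ ≤ ((1 - t)⁻¹) ^ z := by
  have bernoulli : (1 - t) ^ z ≤ 1 - z * t := by
    simpa only [mul_neg, ← sub_eq_add_neg] using
      rpow_one_add_le_one_add_mul_self (s := -t) (by linarith) hz hz1
  rw [inv_rpow (by linarith)]
  exact inv_anti₀ (rpow_pos_of_pos (by linarith) _) bernoulli

theorem tsum_le_tsum_rpow_of_prime_le {f g : ℕ →*₀ ℝ} {z : ℝ} (hz : 0 ≤ z) (hz1 : z ≤ 1)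
    (hf : Summable f) (hg : Summable g) (hf0 : ∀ p : ℕ, p.Prime → 0 ≤ f p)
    (hgf : ∀ p : ℕ, p.Prime → g p ≤ z * f p) :
    ∑' n, g n ≤ (∑' n, f n) ^ z := by
  have hf1 {p : ℕ} (hp : p.Prime) : f p < 1 :=
    (le_abs_self _).trans_lt (Summable.norm_lt_one (f := (f : ℕ →* ℝ)) hf hp.one_lt)
  have hzf1 {p : ℕ} (hp : p.Prime) : z * f p < 1 :=
    (mul_le_of_le_one_left (hf0 p hp) hz1).trans_lt (hf1 hp)
  refine le_of_tendsto_of_tendsto'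
    (EulerProduct.eulerProduct_completely_multiplicative hg.norm)
    ((EulerProduct.eulerProduct_completely_multiplicative hf.norm).rpow_const (Or.inr hz))
    fun N => ?_
  have prime {p : ℕ} (hp : p ∈ N.primesBelow) : p.Prime := Nat.prime_of_mem_primesBelow hp
  rw [← finsetProd_rpow _ _ fun p hp => inv_nonneg.2 (by linarith [hf1 (prime hp)])]
  refine prod_le_prod (fun p hp => inv_nonneg.2 ?_) fun p hp => ?_
  · linarith [hgf p (prime hp), hzf1 (prime hp)]
  · calc (1 - g p)⁻¹ ≤ (1 - z * f p)⁻¹ :=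
          inv_anti₀ (by linarith [hzf1 (prime hp)]) (by linarith [hgf p (prime hp)])
      _ ≤ ((1 - f p)⁻¹) ^ z := inv_one_sub_mul_le_rpow hz hz1 (hf1 (prime hp))

lemma summable_powOmega_mul {f : ℕ → ℝ} {z : ℝ} (hz : 0 ≤ z) (hz1 : z ≤ 1) (hf : Summable f)
    (hf0 : ∀ n, 0 ≤ f n) : Summable fun n => powOmega z n * f n :=
  hf.of_nonneg_of_le (fun n => mul_nonneg (powOmega_nonneg hz n) (hf0 n))
    fun n => mul_le_of_le_one_left (hf0 n) (powOmega_le_one hz hz1 n)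

theorem tsum_powOmega_mul_le {f : ℕ →*₀ ℝ} {z : ℝ} (hz : 0 ≤ z) (hz1 : z ≤ 1)
    (hf : Summable f) (hf0 : ∀ n, 0 ≤ f n) :
    ∑' n, powOmega z n * f n ≤ (∑' n, f n) ^ z :=
  tsum_le_tsum_rpow_of_prime_le (g := powOmega z * f) hz hz1 hf
    (summable_powOmega_mul hz hz1 hf hf0) (fun p _ => hf0 p)
    fun p hp => (congrArg (· * f p) (powOmega_prime z hp)).le

/-- The completely multiplicative function `n ↦ n ^ (-s)`, the summand of `ζ(s)` for real `s`.
The condition `s ≠ 0` is what makes it vanish at `0`. -/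
noncomputable def natRpowNegHom (s : ℝ) (hs : s ≠ 0) : ℕ →*₀ ℝ where
  toFun n := (n : ℝ) ^ (-s)
  map_zero' := by rw [Nat.cast_zero, zero_rpow (neg_ne_zero.2 hs)]
  map_one' := by rw [Nat.cast_one, one_rpow]
  map_mul' m n := by rw [Nat.cast_mul, mul_rpow m.cast_nonneg n.cast_nonneg]

lemma tsum_natCast_rpow_neg_le {s : ℝ} (hs : 1 < s) :
    ∑' n : ℕ, (n : ℝ) ^ (-s) ≤ 1 + 1 / (s - 1) := by
  have hsum : Summable fun n : ℕ => (n : ℝ) ^ (-s) := summable_nat_rpow.2 (by linarith)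
  have shift : ∑' n : ℕ, (n : ℝ) ^ (-s) = ∑' n : ℕ, 1 / ((n : ℝ) + 1) ^ s := by
    rw [hsum.tsum_eq_zero_add, Nat.cast_zero, zero_rpow (by linarith), zero_add]
    refine tsum_congr fun n => ?_
    rw [Nat.cast_succ, rpow_neg (by positivity), one_div]
  have remainder_nonneg : 0 ≤ s * ZetaAsymptotics.termTSum s :=
    mul_nonneg (by linarith) (tsum_nonneg fun n => ZetaAsymptotics.term_nonneg _ _)
  linarith [ZetaAsymptotics.zeta_limit_aux1 hs]

lemma inv_le_exp_one_mul_rpow {x y : ℝ} (hx : 1 < x) (hy : 0 < y) (hyx : y ≤ x) :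
    y⁻¹ ≤ exp 1 * y ^ (-(1 + 1 / log x)) := by
  have hpow : y ^ (1 / log x) ≤ exp 1 := by
    rw [rpow_def_of_pos hy, mul_one_div]
    exact exp_le_exp.2 ((div_le_one (log_pos hx)).2 (log_le_log hy hyx))
  calc y⁻¹ = y ^ (1 / log x) * y ^ (-(1 + 1 / log x)) := by
        rw [← rpow_add hy, ← rpow_neg_one]
        ring_nf
    _ ≤ exp 1 * y ^ (-(1 + 1 / log x)) := by gcongr

theorem sum_div_le_exp_one_mul_tsum {f : ℕ → ℝ} {x : ℝ} (hx : 1 < x) (hf : ∀ n, 0 ≤ f n)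
    (hsum : Summable fun n : ℕ => f n * (n : ℝ) ^ (-(1 + 1 / log x))) :
    ∑ n ∈ Ioc 0 ⌊x⌋₊, f n / n ≤ exp 1 * ∑' n : ℕ, f n * (n : ℝ) ^ (-(1 + 1 / log x)) := by
  calc ∑ n ∈ Ioc 0 ⌊x⌋₊, f n / n
      ≤ ∑ n ∈ Ioc 0 ⌊x⌋₊, exp 1 * (f n * (n : ℝ) ^ (-(1 + 1 / log x))) := by
        refine sum_le_sum fun n hn => ?_
        obtain ⟨hn0, hnx⟩ := mem_Ioc.1 hn
        rw [div_eq_mul_inv, mul_left_comm]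
        exact mul_le_mul_of_nonneg_left (inv_le_exp_one_mul_rpow hx (Nat.cast_pos.2 hn0)
          ((Nat.le_floor_iff (by linarith)).1 hnx)) (hf n)
    _ ≤ exp 1 * ∑' n : ℕ, f n * (n : ℝ) ^ (-(1 + 1 / log x)) := by
        rw [← mul_sum]
        gcongr
        exact hsum.sum_le_tsum _ fun n _ => mul_nonneg (hf n) (by positivity)

theorem sum_powOmega_div_le {z x : ℝ} (hz : 0 ≤ z) (hz1 : z ≤ 1) (hx : 1 < x) :
    ∑ n ∈ Ioc 0 ⌊x⌋₊, powOmega z n / n ≤ exp 1 * (1 + log x) ^ z := by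
  set s := 1 + 1 / log x with hs
  have hs1 : 1 < s := lt_add_of_pos_right 1 (one_div_pos.2 (log_pos hx))
  have hsum : Summable fun n : ℕ => (n : ℝ) ^ (-s) := summable_nat_rpow.2 (by linarith)
  have hnonneg (n : ℕ) : 0 ≤ (n : ℝ) ^ (-s) := by positivity
  calc ∑ n ∈ Ioc 0 ⌊x⌋₊, powOmega z n / n
      ≤ exp 1 * ∑' n : ℕ, powOmega z n * (n : ℝ) ^ (-s) :=
        sum_div_le_exp_one_mul_tsum hx (powOmega_nonneg hz)
          (summable_powOmega_mul hz hz1 hsum hnonneg)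
    _ ≤ exp 1 * (∑' n : ℕ, (n : ℝ) ^ (-s)) ^ z := by
        gcongr
        exact tsum_powOmega_mul_le (f := natRpowNegHom s (by linarith)) hz hz1 hsum hnonneg
    _ ≤ exp 1 * (1 + log x) ^ z := by
        have hzeta := tsum_natCast_rpow_neg_le hs1
        rw [hs, add_sub_cancel_left, one_div_one_div, ← hs] at hzeta
        gcongr

lemma apply_mul_log_le_sum_divisorsAntidiagonal {f : ℕ →*₀ ℝ} {c : ℝ} (hf : ∀ n, 0 ≤ f n)
    (hc : ∀ q, IsPrimePow q → f q ≤ c) (n : ℕ) :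
    f n * log n ≤ c * ∑ d ∈ n.divisorsAntidiagonal, f d.1 * Λ d.2 := by
  rw [← vonMangoldt_sum, ← Nat.sum_divisorsAntidiagonal' fun _ d => Λ d, mul_sum, mul_sum]
  refine sum_le_sum fun d hd => ?_
  rw [← (Nat.mem_divisorsAntidiagonal.1 hd).1, map_mul]
  have hΛ : f d.2 * Λ d.2 ≤ c * Λ d.2 := by
    by_cases hq : IsPrimePow d.2
    · exact mul_le_mul_of_nonneg_right (hc _ hq) vonMangoldt_nonneg
    · simp only [vonMangoldt_eq_zero_iff.2 hq, mul_zero, le_refl]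
  linarith [mul_le_mul_of_nonneg_left hΛ (hf d.1)]

lemma sum_vonMangoldt_Ioc_div_le (N m : ℕ) :
    ∑ d ∈ Ioc 0 (N / m), Λ d ≤ (log 4 + 4) * (N / m) := by
  have hpsi := Chebyshev.psi_le_const_mul_self (N / m : ℕ).cast_nonneg
  rw [Chebyshev.psi, Nat.floor_natCast] at hpsi
  exact hpsi.trans (by gcongr; exact Nat.cast_div_le)

theorem sum_mul_log_le {f : ℕ →*₀ ℝ} {c : ℝ} (hf : ∀ n, 0 ≤ f n)
    (hc : ∀ q, IsPrimePow q → f q ≤ c) (N : ℕ) :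
    ∑ n ∈ Ioc 0 N, f n * log n ≤ c * ((log 4 + 4) * N * ∑ m ∈ Ioc 0 N, f m / m) := by
  have hc0 : 0 ≤ c := (hf 2).trans (hc 2 Nat.prime_two.isPrimePow)
  let F : ArithmeticFunction ℝ := ⟨f, map_zero f⟩
  calc ∑ n ∈ Ioc 0 N, f n * log n ≤ ∑ n ∈ Ioc 0 N, c * (F * Λ) n :=
        sum_le_sum fun n _ => apply_mul_log_le_sum_divisorsAntidiagonal hf hc n
    _ = c * ∑ m ∈ Ioc 0 N, f m * ∑ d ∈ Ioc 0 (N / m), Λ d := by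
        rw [← mul_sum, sum_Ioc_mul_eq_sum_sum]
        rfl
    _ ≤ c * ∑ m ∈ Ioc 0 N, f m * ((log 4 + 4) * (N / m)) := by
        gcongr with m
        · exact hf m
        · exact sum_vonMangoldt_Ioc_div_le N m
    _ = c * ((log 4 + 4) * N * ∑ m ∈ Ioc 0 N, f m / m) := by
        rw [mul_sum (Ioc 0 N) _ ((log 4 + 4) * N)]
        exact congrArg (c * ·) (sum_congr rfl fun m _ => by ring)

theorem card_le_add_sum_log_div (S : Finset ℕ) (hS : 0 ∉ S) {y : ℝ} (hy : 1 < y) :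
    (#S : ℝ) ≤ y + (∑ n ∈ S, log n) / log y := by
  have small : (#{n ∈ S | n ≤ ⌊y⌋₊} : ℝ) ≤ y := by
    have hsub : {n ∈ S | n ≤ ⌊y⌋₊} ⊆ Ioc 0 ⌊y⌋₊ := fun n hn => by
      obtain ⟨hnS, hny⟩ := mem_filter.1 hn
      exact mem_Ioc.2 ⟨Nat.pos_of_ne_zero (ne_of_mem_of_not_mem hnS hS), hny⟩
    calc (#{n ∈ S | n ≤ ⌊y⌋₊} : ℝ) ≤ (⌊y⌋₊ : ℝ) := by
          exact_mod_cast (card_le_card hsub).trans_eq (Nat.card_Ioc 0 _)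
      _ ≤ y := Nat.floor_le (by linarith)
  have large : (#{n ∈ S | ¬ n ≤ ⌊y⌋₊} : ℝ) * log y ≤ ∑ n ∈ S, log n :=
    calc (#{n ∈ S | ¬ n ≤ ⌊y⌋₊} : ℝ) * log y ≤ ∑ n ∈ S with ¬ n ≤ ⌊y⌋₊, log n := by
          rw [← nsmul_eq_mul]
          refine card_nsmul_le_sum _ _ _ fun n hn => log_le_log (by linarith) ?_
          exact (Nat.lt_of_floor_lt (not_le.1 (mem_filter.1 hn).2)).le
      _ ≤ ∑ n ∈ S, log n :=
          sum_le_sum_of_subset_of_nonneg (filter_subset _ _) fun n _ _ => log_natCast_nonneg n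
  rw [← card_filter_add_card_filter_not (s := S) (· ≤ ⌊y⌋₊), Nat.cast_add]
  exact add_le_add small ((le_div_iff₀ (log_pos hy)).2 large)

lemma sum_filter_cardFactors_le {z : ℝ} (hz : 0 < z) (hz1 : z ≤ 1) (k N : ℕ) {g : ℕ → ℝ}
    (hg : ∀ n, 0 ≤ g n) :
    ∑ n ∈ Ioc 0 N with Ω n ≤ k, g n ≤ (∑ n ∈ Ioc 0 N, powOmega z n * g n) / z ^ k := by
  rw [le_div_iff₀ (by positivity), sum_mul]
  refine (sum_le_sum fun n hn => ?_).trans (sum_le_sum_of_subset_of_nonneg (filter_subset _ _)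
    fun n _ _ => mul_nonneg (powOmega_nonneg hz.le n) (hg n))
  obtain ⟨hnN, hnk⟩ := mem_filter.1 hn
  rw [powOmega_apply z (mem_Ioc.1 hnN).1.ne', mul_comm]
  exact mul_le_mul_of_nonneg_right (pow_le_pow_of_le_one hz.le hz1 hnk) (hg n)

theorem sum_log_filter_cardFactors_le {z x : ℝ} (hz : 0 < z) (hz1 : z ≤ 1) (hx : 1 < x) (k : ℕ) :
    ∑ n ∈ Ioc 0 ⌊x⌋₊ with Ω n ≤ k + 1, log n ≤
      (log 4 + 4) * exp 1 * x * ((1 + log x) ^ z / z ^ k) := by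
  have hlog : 0 < log x := log_pos hx
  calc ∑ n ∈ Ioc 0 ⌊x⌋₊ with Ω n ≤ k + 1, log n
      ≤ (∑ n ∈ Ioc 0 ⌊x⌋₊, powOmega z n * log n) / z ^ (k + 1) :=
        sum_filter_cardFactors_le hz hz1 _ _ fun n => log_natCast_nonneg n
    _ ≤ z * ((log 4 + 4) * ⌊x⌋₊ * ∑ m ∈ Ioc 0 ⌊x⌋₊, powOmega z m / m) / z ^ (k + 1) := by
        gcongr
        exact sum_mul_log_le (powOmega_nonneg hz.le)
          (fun q hq => powOmega_le_self_of_one_lt hz.le hz1 hq.one_lt) _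
    _ ≤ z * ((log 4 + 4) * x * (exp 1 * (1 + log x) ^ z)) / z ^ (k + 1) := by
        gcongr
        · exact sum_nonneg fun m _ => div_nonneg (powOmega_nonneg hz.le m) m.cast_nonneg
        · exact Nat.floor_le (by linarith)
        · exact sum_powOmega_div_le hz.le hz1 hx
    _ = (log 4 + 4) * exp 1 * x * ((1 + log x) ^ z / z ^ k) := by
        rw [pow_succ']
        field_simp

lemma sqrt_le_two_mul_div_log {x : ℝ} (hx : 1 < x) : √x ≤ 2 * x / log x := by
  rw [le_div_iff₀ (log_pos hx)]
  have hlog : log x ≤ 2 * √x := by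
    linarith [log_sqrt (x := x) (by linarith), log_le_self (sqrt_nonneg x)]
  calc √x * log x ≤ √x * (2 * √x) := by gcongr
    _ = 2 * x := by rw [mul_left_comm, mul_self_sqrt (by linarith)]

lemma one_add_rpow_le_two_mul_rpow {z y : ℝ} (hz : 0 ≤ z) (hz1 : z ≤ 1) (hy : 1 ≤ y) :
    (1 + y) ^ z ≤ 2 * y ^ z :=
  calc (1 + y) ^ z ≤ (2 * y) ^ z := by gcongr; linarith
    _ = 2 ^ z * y ^ z := mul_rpow (by norm_num) (by linarith)
    _ ≤ 2 * y ^ z := by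
        gcongr
        exact rpow_le_self_of_one_le (by norm_num) hz1

theorem card_filter_cardFactors_le {z x : ℝ} (hz : 0 < z) (hz1 : z ≤ 1) (hx : 0 < x)
    (hlog : 1 ≤ log x) (k : ℕ) :
    (#{n ∈ Ioc 0 ⌊x⌋₊ | Ω n ≤ k + 1} : ℝ) ≤
      (2 + 4 * ((log 4 + 4) * exp 1)) * x * (log x ^ z / (z ^ k * log x)) := by
  have hx1 : 1 < x := (log_pos_iff hx.le).1 (by linarith)
  set K := (log 4 + 4) * exp 1
  set Q := log x ^ z / z ^ k
  have hQ : 1 ≤ Q := (one_le_div (by positivity)).2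
    ((pow_le_one₀ hz.le hz1).trans (one_le_rpow hlog hz.le))
  calc (#{n ∈ Ioc 0 ⌊x⌋₊ | Ω n ≤ k + 1} : ℝ)
      ≤ √x + (∑ n ∈ Ioc 0 ⌊x⌋₊ with Ω n ≤ k + 1, log n) / log √x :=
        card_le_add_sum_log_div _ (by simp) (lt_sqrt_of_sq_lt (by simpa using hx1))
    _ ≤ 2 * x / log x * Q + K * x * (2 * Q) / (log x / 2) := by
        rw [log_sqrt hx.le]
        gcongr ?_ + ?_ / _
        · exact (sqrt_le_two_mul_div_log hx1).trans (le_mul_of_one_le_right (by positivity) hQ)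
        · refine (sum_log_filter_cardFactors_le hz hz1 hx1 k).trans ?_
          rw [← mul_div_assoc 2]
          gcongr
          exact one_add_rpow_le_two_mul_rpow hz.le hz1 hlog
    _ = (2 + 4 * K) * x * (log x ^ z / (z ^ k * log x)) := by
        simp only [Q]
        field_simp
        ring

lemma rpow_sub_mul_log_sub_one {y α : ℝ} {k : ℕ} (hy : 0 < y) (hα : 0 < α)
    (hk : α * log y = k) : y ^ (α - α * log α - 1) = y ^ α / (α ^ k * y) := by
  have hpow : y ^ (α * log α) = α ^ k := by
    rw [← rpow_natCast, ← hk, rpow_def_of_pos hy, rpow_def_of_pos hα]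
    ring_nf
  rw [rpow_sub hy, rpow_sub hy, rpow_one, hpow, div_div]

theorem count_small_Omega_rpow_bound_general :
    ∃ C : ℝ, ∀ x : ℝ, 1 < x → ∀ i : ℕ, 2 ≤ i → (i : ℝ) - 1 ≤ log (log x) →
      (#{n ∈ Icc 1 ⌊x⌋₊ | Ω n ≤ i} : ℝ) ≤
        C * x * log x ^ (((i : ℝ) - 1) / log (log x) -
          ((i : ℝ) - 1) / log (log x) * log (((i : ℝ) - 1) / log (log x)) - 1) := by
  refine ⟨2 + 4 * ((log 4 + 4) * exp 1), fun x hx i hi hix => ?_⟩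
  obtain ⟨k, rfl⟩ : ∃ k, i = k + 1 := ⟨i - 1, by lia⟩
  have hk : (1 : ℝ) ≤ k := by exact_mod_cast (by lia : 1 ≤ k)
  rw [Nat.cast_succ, add_sub_cancel_right] at hix ⊢
  have hlog : 0 < log x := log_pos hx
  have hloglog : 0 < log (log x) := by linarith
  have hlog1 : 1 ≤ log x := ((log_pos_iff hlog.le).1 hloglog).le
  have hα : 0 < k / log (log x) := by positivity
  rw [rpow_sub_mul_log_sub_one hlog hα (div_mul_cancel₀ _ hloglog.ne')]
  exact card_filter_cardFactors_le hα ((div_le_one hloglog).2 hix) (by linarith) hlog1 k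

/-- For every `δ > 0` there is a constant `C` such that for all sufficiently large `x` and
every integer `i` with `2 ≤ i ≤ (1 - δ) log log x`, the number of positive integers `n ≤ x`
with `Ω(n) ≤ i` is at most `C · x · (log x)^{α - α log α - 1}` where `α = (i-1)/log log x`. -/
theorem count_small_Omega_rpow_bound :
    ∀ δ : ℝ, 0 < δ → ∃ C : ℝ, ∃ X : ℝ, ∀ x : ℝ, X ≤ x →
      ∀ i : ℕ, 2 ≤ i → (i : ℝ) ≤ (1 - δ) * Real.log (Real.log x) →
      (((Finset.Icc 1 ⌊x⌋₊).filter fun n => n.primeFactorsList.length ≤ i).card : ℝ) ≤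
        C * x * Real.log x ^
          ((((i : ℝ) - 1) / Real.log (Real.log x)) -
            (((i : ℝ) - 1) / Real.log (Real.log x)) *
              Real.log (((i : ℝ) - 1) / Real.log (Real.log x)) - 1) := by
  intro δ hδ
  obtain ⟨C, hC⟩ := count_small_Omega_rpow_bound_general
  refine ⟨C, exp 1, fun x hx i hi hiδ => hC x ((one_lt_exp_iff.2 one_pos).trans_le hx) i hi ?_⟩
  have hlog : 1 ≤ log x := (le_log_iff_exp_le ((exp_pos 1).trans_le hx)).2 hx
  linarith [mul_nonneg hδ.le (log_nonneg hlog)]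
end
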